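/- arXiv:2408.04903 — 3 statements merged into one kernel-verified Lean document; each statement's English description precedes it below -/
import Mathlib

section
/- If an explainer L satisfies Success, Feasibility and Coherence, then L satisfies Validity. -/
/-- A classification theory: a finite set of features, a finite domain (with at
least two values) for each feature, and a finite set of at least two classes. -/
structure CTheory where
  F : Finset ℕ
  dom : ℕ → Finset ℕ
  dom_nontrivial : ∀ f ∈ F, 1 < (dom f).card
  C : Finset ℕ
  C_nontrivial : 2 ≤ C.card

/-- A literal of a theory is a pair (feature, value) with the value in the
feature's domain. -/
def IsLiteral (T : CTheory) (l : ℕ × ℕ) : Prop :=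
  l.1 ∈ T.F ∧ l.2 ∈ T.dom l.1

/-- A set of literals is consistent iff no feature gets two distinct values. -/
def ConsistentLits (S : Set (ℕ × ℕ)) : Prop :=
  ∀ l ∈ S, ∀ l' ∈ S, l.1 = l'.1 → l.2 = l'.2

/-- A partial assignment: a consistent set of literals (each feature occurs at
most once). -/
def IsPartialAssignment (T : CTheory) (E : Set (ℕ × ℕ)) : Prop :=
  (∀ l ∈ E, IsLiteral T l) ∧ ConsistentLits E

/-- An instance: a partial assignment in which every feature occurs (exactly) once. -/
def IsInstance (T : CTheory) (x : Set (ℕ × ℕ)) : Prop :=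
  IsPartialAssignment T x ∧ ∀ f ∈ T.F, ∃ v, (f, v) ∈ x

/-- The feature space of a theory: the set of all its instances. -/
def FeatureSpace (T : CTheory) : Set (Set (ℕ × ℕ)) := {x | IsInstance T x}

/-- A classifier maps every instance to a class. -/
def IsClassifier (T : CTheory) (κ : Set (ℕ × ℕ) → ℕ) : Prop :=
  ∀ x ∈ FeatureSpace T, κ x ∈ T.C

/-- A question (T, κ, D, x): κ is a classifier on T, D ⊆ F(T) and x ∈ D. -/
def IsQuestion (T : CTheory) (κ : Set (ℕ × ℕ) → ℕ)
    (D : Set (Set (ℕ × ℕ))) (x : Set (ℕ × ℕ)) : Prop :=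
  IsClassifier T κ ∧ D ⊆ FeatureSpace T ∧ x ∈ D

/-- An explainer maps every question (T, κ, D, x) to a set of sets of literals. -/
abbrev Explainer :=
  CTheory → (Set (ℕ × ℕ) → ℕ) → Set (Set (ℕ × ℕ)) → Set (ℕ × ℕ) → Set (Set (ℕ × ℕ))

/-- An explainer returns, on every question over T, a subset of E(T)
(the partial assignments of T). -/
def IsExplainer (L : Explainer) : Prop :=
  ∀ T κ D x, IsQuestion T κ D x → ∀ E ∈ L T κ D x, IsPartialAssignment T E

/-- Feasibility: every explanation is part of the instance being explained. -/
def Feasibility (L : Explainer) : Prop :=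
  ∀ T κ D x, IsQuestion T κ D x → ∀ E ∈ L T κ D x, E ⊆ x

/-- Validity: no explanation is contradicted within the dataset. -/
def Validity (L : Explainer) : Prop :=
  ∀ T κ D x, IsQuestion T κ D x → ∀ E ∈ L T κ D x,
    ¬ ∃ y ∈ D, E ⊆ y ∧ κ y ≠ κ x

/-- Success: every question receives at least one explanation. -/
def Success (L : Explainer) : Prop :=
  ∀ T κ D x, IsQuestion T κ D x → (L T κ D x).Nonempty

/-- Coherence: explanations of instances with distinct classes are jointly
inconsistent. -/
def Coherence (L : Explainer) : Prop :=
  ∀ T κ D x x', IsQuestion T κ D x → IsQuestion T κ D x' → κ x ≠ κ x' →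
    ∀ E ∈ L T κ D x, ∀ E' ∈ L T κ D x', ¬ ConsistentLits (E ∪ E')

/-- Irreducibility: no literal of an explanation can be removed
(witnessed in the dataset). -/
def Irreducibility (L : Explainer) : Prop :=
  ∀ T κ D x, IsQuestion T κ D x → ∀ E ∈ L T κ D x, ∀ l ∈ E,
    ∃ x' ∈ D, κ x' ≠ κ x ∧ E \ {l} ⊆ x'

/-- Strong Irreducibility: no literal of an explanation can be removed
(witnessed in the feature space). -/
def StrongIrreducibility (L : Explainer) : Prop :=
  ∀ T κ D x, IsQuestion T κ D x → ∀ E ∈ L T κ D x, ∀ l ∈ E,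
    ∃ x' ∈ FeatureSpace T, κ x' ≠ κ x ∧ E \ {l} ⊆ x'

/-- Completeness: every omitted candidate is invalidated within the dataset. -/
def Completeness (L : Explainer) : Prop :=
  ∀ T κ D x, IsQuestion T κ D x → ∀ E ⊆ x, E ∉ L T κ D x →
    ∃ y ∈ D, E ⊆ y ∧ κ y ≠ κ x

/-- Strong Completeness: every omitted candidate is invalidated within the
feature space. -/
def StrongCompleteness (L : Explainer) : Prop :=
  ∀ T κ D x, IsQuestion T κ D x → ∀ E ⊆ x, E ∉ L T κ D x →
    ∃ y ∈ FeatureSpace T, E ⊆ y ∧ κ y ≠ κ x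

/-- Monotonicity: enlarging the dataset preserves explanations. -/
def Monotonicity (L : Explainer) : Prop :=
  ∀ T κ D D' x, IsQuestion T κ D x → IsQuestion T κ D' x → D ⊆ D' →
    L T κ D x ⊆ L T κ D' x

/-- Counter-Monotonicity: enlarging the dataset can only discard explanations. -/
def CounterMonotonicity (L : Explainer) : Prop :=
  ∀ T κ D D' x, IsQuestion T κ D x → IsQuestion T κ D' x → D ⊆ D' →
    L T κ D' x ⊆ L T κ D x

/-- The explainer L_dw returning all weak abductive explanations (dwAXp's):
E ⊆ x and every y ∈ D containing E has the same class as x. -/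
def Ldw : Explainer := fun _T κ D x =>
  {E | E ⊆ x ∧ ∀ y ∈ D, E ⊆ y → κ y = κ x}

/-- The explainer L_w returning the weak abductive explanations computed on the
whole feature space. -/
def Lw : Explainer := fun T κ _D x => Ldw T κ (FeatureSpace T) x

/-- The explainer L_dc returning the subset-minimal weak abductive explanations
(concise abductive explanations). -/
def Ldc : Explainer := fun T κ D x =>
  {E | E ∈ Ldw T κ D x ∧ ∀ E' ∈ Ldw T κ D x, E' ⊆ E → E' = E}

/-- A set X of partial assignments is coherent under (D, κ): no two of its
members are consistent together while being contained in instances of D with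
distinct classes. -/
def CoherentSet (κ : Set (ℕ × ℕ) → ℕ) (D : Set (Set (ℕ × ℕ)))
    (X : Set (Set (ℕ × ℕ))) : Prop :=
  ¬ ∃ E ∈ X, ∃ E' ∈ X, ConsistentLits (E ∪ E') ∧
      ∃ y ∈ D, ∃ z ∈ D, E ⊆ y ∧ E' ⊆ z ∧ κ y ≠ κ z

/-- An envelope under (D, κ): a coherent set of dwAXp's covering every instance
of D. -/
def IsEnvelope (T : CTheory) (κ : Set (ℕ × ℕ) → ℕ) (D : Set (Set (ℕ × ℕ)))
    (X : Set (Set (ℕ × ℕ))) : Prop :=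
  (∀ E ∈ X, IsPartialAssignment T E) ∧
  CoherentSet κ D X ∧
  (∀ E ∈ X, ∃ x ∈ D, E ∈ Ldw T κ D x) ∧
  (∀ x ∈ D, ∃ E ∈ X, E ⊆ x)

/-- W: the union of all dwAXp's of all instances of the dataset. -/
def dwUnion (T : CTheory) (κ : Set (ℕ × ℕ) → ℕ) (D : Set (Set (ℕ × ℕ))) :
    Set (Set (ℕ × ℕ)) :=
  {E | ∃ x ∈ D, E ∈ Ldw T κ D x}

/-- The two defining conditions of an irrefutable envelope (before maximality):
a set of dwAXp's none of which conflicts with any dwAXp. -/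
def IrrCandidate (T : CTheory) (κ : Set (ℕ × ℕ) → ℕ) (D : Set (Set (ℕ × ℕ)))
    (X : Set (Set (ℕ × ℕ))) : Prop :=
  X ⊆ dwUnion T κ D ∧
  ∀ E ∈ X, ¬ ∃ E' ∈ dwUnion T κ D, ¬ CoherentSet κ D {E, E'}

/-- An irrefutable envelope under (D, κ): a subset-maximal set of mutually
irrefutable dwAXp's. -/
def IsIrrefutableEnvelope (T : CTheory) (κ : Set (ℕ × ℕ) → ℕ)
    (D : Set (Set (ℕ × ℕ))) (X : Set (Set (ℕ × ℕ))) : Prop :=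
  IrrCandidate T κ D X ∧ ∀ X', IrrCandidate T κ D X' → ¬ X ⊂ X'

/-- A coherent explainer: on every question, it returns the members of a fixed
envelope (the union of its outputs over the dataset) included in the instance. -/
def IsCoherentExplainer (L : Explainer) : Prop :=
  ∀ T κ D x, IsQuestion T κ D x →
    L T κ D x = {E | (∃ z ∈ D, E ∈ L T κ D z) ∧ E ⊆ x} ∧
    IsEnvelope T κ D {E | ∃ z ∈ D, E ∈ L T κ D z}

theorem ConsistentLits.mono {S S' : Set (ℕ × ℕ)} (hS' : ConsistentLits S') (hSS' : S ⊆ S') :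
    ConsistentLits S :=
  fun l hl l' hl' => hS' l (hSS' hl) l' (hSS' hl')

section

variable {T : CTheory} {κ : Set (ℕ × ℕ) → ℕ} {D : Set (Set (ℕ × ℕ))} {x y E E' : Set (ℕ × ℕ)}

theorem IsQuestion.of_mem (hx : IsQuestion T κ D x) (hy : y ∈ D) : IsQuestion T κ D y :=
  ⟨hx.1, hx.2.1, hy⟩

theorem IsQuestion.consistentLits (hx : IsQuestion T κ D x) : ConsistentLits x :=
  (hx.2.1 hx.2.2).1.2

theorem Feasibility.consistentLits_union_of_subset {L : Explainer} (hFea : Feasibility L)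
    (hy : IsQuestion T κ D y) (hEy : E ⊆ y) (hE' : E' ∈ L T κ D y) :
    ConsistentLits (E ∪ E') :=
  hy.consistentLits.mono (Set.union_subset hEy (hFea T κ D y hy E' hE'))

end

theorem success_feasibility_coherence_imply_validity (L : Explainer) (hL : IsExplainer L)
    (hSuc : Success L) (hFea : Feasibility L) (hCoh : Coherence L) : Validity L := by
  rintro T κ D x hx E hE ⟨y, hyD, hEy, hne⟩
  have hy : IsQuestion T κ D y := hx.of_mem hyD
  obtain ⟨E', hE'⟩ : (L T κ D y).Nonempty := hSuc T κ D y hy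
  have hcons : ConsistentLits (E ∪ E') := hFea.consistentLits_union_of_subset hy hEy hE'
  exact hCoh T κ D x y hx hy hne.symm E hE E' hE' hcons
end

section
/- The explainer L_dw satisfies Feasibility, Validity, Success, Completeness, Strong Completeness and Counter-Monotonicity, and it violates Coherence, Irreducibility, Strong Irreducibility and Monotonicity. -/
/-!
An instance contained in another instance equals it, so `x` always explains itself; the remaining
positive properties are the definition of a dwAXp read in different directions.

Each violated property would force `κ` to behave in a way that a small theory refutes.
* Monotonicity: `∅` explains `x` over the dataset `{x}`, hence it would do so over every larger
  dataset, making `κ` constant there.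
* Strong Irreducibility: `x` explains itself, so if it has a literal, then `κ` would be nonconstant.
* Coherence: over a dataset of instances each assigning one value to all features, every single
  literal of an instance is an explanation of it. Literals on distinct features are consistent, so
  with two features these instances would all have the same class.
-/

section General

variable {T : CTheory} {κ : Set (ℕ × ℕ) → ℕ} {D D' : Set (Set (ℕ × ℕ))} {x y : Set (ℕ × ℕ)}

lemma consistentLits_pair {l l' : ℕ × ℕ} (h : l.1 ≠ l'.1) : ConsistentLits ({l} ∪ {l'}) := by
  rintro _ (rfl | rfl) _ (rfl | rfl) hfeature
  · rfl
  · exact absurd hfeature h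
  · exact absurd hfeature.symm h
  · rfl

lemma IsInstance.eq_of_subset (hx : IsInstance T x) (hy : IsPartialAssignment T y) (hxy : x ⊆ y) :
    x = y := by
  refine hxy.antisymm ?_
  rintro ⟨f, v⟩ hv
  obtain ⟨w, hw⟩ := hx.2 f (hy.1 _ hv).1
  obtain rfl : v = w := hy.2 _ hv _ (hxy hw) rfl
  exact hw

lemma IsQuestion.of_subset (h : IsQuestion T κ D x) (hD : D' ⊆ D) (hx : x ∈ D') :
    IsQuestion T κ D' x :=
  ⟨h.1, hD.trans h.2.1, hx⟩

lemma IsQuestion.self_mem_Ldw (h : IsQuestion T κ D x) : x ∈ Ldw T κ D x := by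
  obtain ⟨-, hD, hx⟩ := h
  refine ⟨subset_rfl, fun y hy hxy => ?_⟩
  rw [IsInstance.eq_of_subset (hD hx) (hD hy).1 hxy]

lemma Completeness.strongCompleteness {L : Explainer} (h : Completeness L) :
    StrongCompleteness L := by
  intro T κ D x hQ E hE hEL
  obtain ⟨y, hy, hEy, hne⟩ := h T κ D x hQ E hE hEL
  exact ⟨y, hQ.2.1 hy, hEy, hne⟩

lemma Irreducibility.strongIrreducibility {L : Explainer} (h : Irreducibility L) :
    StrongIrreducibility L := by
  intro T κ D x hQ E hE l hl
  obtain ⟨y, hy, hne, hEy⟩ := h T κ D x hQ E hE l hl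
  exact ⟨y, hQ.2.1 hy, hne, hEy⟩

end General

lemma feasibility_Ldw : Feasibility Ldw :=
  fun _ _ _ _ _ _ hE => hE.1

lemma validity_Ldw : Validity Ldw :=
  fun _ _ _ _ _ _ hE ⟨y, hy, hEy, hne⟩ => hne (hE.2 y hy hEy)

lemma success_Ldw : Success Ldw :=
  fun _ _ _ x hQ => ⟨x, hQ.self_mem_Ldw⟩

lemma completeness_Ldw : Completeness Ldw := by
  intro T κ D x _ E hE hEL
  by_contra! hsame
  exact hEL ⟨hE, hsame⟩

lemma counterMonotonicity_Ldw : CounterMonotonicity Ldw :=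
  fun _ _ _ _ _ _ _ hD _ hE => ⟨hE.1, fun y hy => hE.2 y (hD hy)⟩

/-- The set of literals giving every feature of `T` the same value `a`. It is an instance only when
`a` lies in the domain of every feature. -/
def constInstance (T : CTheory) (a : ℕ) : Set (ℕ × ℕ) := (T.F : Set ℕ) ×ˢ {a}

section Consequences

variable {T : CTheory} {κ : Set (ℕ × ℕ) → ℕ} {D : Set (Set (ℕ × ℕ))} {x y : Set (ℕ × ℕ)}
  {A : Set ℕ} {a b f : ℕ}

lemma constInstance_mem_FeatureSpace (ha : ∀ f ∈ T.F, a ∈ T.dom f) :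
    constInstance T a ∈ FeatureSpace T := by
  refine ⟨⟨?_, ?_⟩, fun f hf => ⟨a, hf, rfl⟩⟩
  · rintro ⟨f, _⟩ ⟨hf, rfl⟩
    exact ⟨hf, ha f hf⟩
  · rintro l ⟨-, hl⟩ l' ⟨-, hl'⟩ -
    exact hl.trans hl'.symm

lemma isQuestion_constInstance (hκ : IsClassifier T κ) (hA : ∀ a ∈ A, ∀ f ∈ T.F, a ∈ T.dom f)
    (ha : a ∈ A) : IsQuestion T κ (constInstance T '' A) (constInstance T a) :=
  ⟨hκ, Set.image_subset_iff.2 fun a ha => constInstance_mem_FeatureSpace (hA a ha),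
    Set.mem_image_of_mem _ ha⟩

lemma singleton_mem_Ldw_constInstance (hf : f ∈ T.F) :
    {(f, a)} ∈ Ldw T κ (constInstance T '' A) (constInstance T a) := by
  refine ⟨Set.singleton_subset_iff.2 ⟨hf, rfl⟩, ?_⟩
  rintro _ ⟨b, -, rfl⟩ hb
  obtain rfl : a = b := (Set.singleton_subset_iff.1 hb).2
  rfl

lemma Coherence.apply_constInstance_eq (h : Coherence Ldw) (hκ : IsClassifier T κ)
    (hF : T.F.Nontrivial) (hA : ∀ a ∈ A, ∀ f ∈ T.F, a ∈ T.dom f) (ha : a ∈ A) (hb : b ∈ A) :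
    κ (constInstance T a) = κ (constInstance T b) := by
  obtain ⟨f, hf, g, hg, hfg⟩ := hF
  by_contra hne
  exact h T κ _ _ _ (isQuestion_constInstance hκ hA ha) (isQuestion_constInstance hκ hA hb) hne
    {(f, a)} (singleton_mem_Ldw_constInstance hf) {(g, b)} (singleton_mem_Ldw_constInstance hg)
    (consistentLits_pair hfg)

lemma StrongIrreducibility.exists_apply_ne (h : StrongIrreducibility Ldw)
    (hQ : IsQuestion T κ D x) (hx : x.Nonempty) : ∃ y ∈ FeatureSpace T, κ y ≠ κ x := by
  obtain ⟨l, hl⟩ := hx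
  obtain ⟨y, hy, hne, -⟩ := h T κ D x hQ x hQ.self_mem_Ldw l hl
  exact ⟨y, hy, hne⟩

lemma Monotonicity.apply_eq (h : Monotonicity Ldw) (hQ : IsQuestion T κ D x) (hy : y ∈ D) :
    κ y = κ x := by
  have hxD : {x} ⊆ D := Set.singleton_subset_iff.2 hQ.2.2
  have hempty : ∅ ∈ Ldw T κ {x} x := ⟨x.empty_subset, fun _ hz _ => congrArg κ hz⟩
  exact (h T κ {x} D x (hQ.of_subset hxD rfl) hQ hxD hempty).2 y hy y.empty_subset

end Consequences

/-- The theory with features, values and classes `0` and `1`, in which the counterexamples live. -/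
def binaryTheory : CTheory where
  F := {0, 1}
  dom _ := {0, 1}
  dom_nontrivial _ _ := by decide
  C := {0, 1}
  C_nontrivial := by decide

/-- The classifier of `binaryTheory` that returns the value of feature `0`, encoded as the indicator
of the sets containing the literal `(0, 1)`. -/
noncomputable def featureZeroClassifier : Set (ℕ × ℕ) → ℕ := Set.indicator {z | (0, 1) ∈ z} 1

lemma isClassifier_featureZeroClassifier : IsClassifier binaryTheory featureZeroClassifier := by
  intro z _
  by_cases hz : (0, 1) ∈ z <;> simp [featureZeroClassifier, binaryTheory, hz]

lemma featureZeroClassifier_constInstance_ne :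
    featureZeroClassifier (constInstance binaryTheory 0) ≠
      featureZeroClassifier (constInstance binaryTheory 1) := by
  simp [featureZeroClassifier, constInstance, binaryTheory]

lemma mem_dom_binaryTheory : ∀ a ∈ ({0, 1} : Set ℕ), ∀ f ∈ binaryTheory.F,
    a ∈ binaryTheory.dom f := by
  simp [binaryTheory]

lemma not_coherence_Ldw : ¬ Coherence Ldw := by
  intro h
  have htwo : binaryTheory.F.Nontrivial := ⟨0, by simp [binaryTheory], 1, by simp [binaryTheory]⟩
  exact featureZeroClassifier_constInstance_ne <| h.apply_constInstance_eq
    isClassifier_featureZeroClassifier htwo mem_dom_binaryTheory (by simp) (by simp)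

lemma not_strongIrreducibility_Ldw : ¬ StrongIrreducibility Ldw := by
  intro h
  have hconst : IsClassifier binaryTheory fun _ => 0 := fun _ _ => by simp [binaryTheory]
  have hnonempty : (constInstance binaryTheory 0).Nonempty :=
    ⟨(0, 0), by simp [constInstance, binaryTheory]⟩
  obtain ⟨_, -, hne⟩ := h.exists_apply_ne
    (isQuestion_constInstance hconst mem_dom_binaryTheory (Set.mem_insert 0 {1})) hnonempty
  exact hne rfl

lemma not_monotonicity_Ldw : ¬ Monotonicity Ldw := fun h =>
  featureZeroClassifier_constInstance_ne <|
    h.apply_eq (isQuestion_constInstance isClassifier_featureZeroClassifier mem_dom_binaryTheory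
      (by simp)) (Set.mem_image_of_mem _ (Set.mem_insert 0 {1}))

theorem Ldw_axioms :
    Feasibility Ldw ∧ Validity Ldw ∧ Success Ldw ∧ Completeness Ldw ∧
    StrongCompleteness Ldw ∧ CounterMonotonicity Ldw ∧
    ¬ Coherence Ldw ∧ ¬ Irreducibility Ldw ∧ ¬ StrongIrreducibility Ldw ∧
    ¬ Monotonicity Ldw :=
  ⟨feasibility_Ldw, validity_Ldw, success_Ldw, completeness_Ldw,
    completeness_Ldw.strongCompleteness, counterMonotonicity_Ldw,
    not_coherence_Ldw, mt Irreducibility.strongIrreducibility not_strongIrreducibility_Ldw,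
    not_strongIrreducibility_Ldw, not_monotonicity_Ldw⟩
end

section
/- An explainer L satisfies Feasibility, Validity, Monotonicity and Strong Completeness if and only if L = L_w, i.e. for every question Q = (T, κ, D, x), L(Q) = L_w(Q). -/
/-! Feasibility and Validity together bound `L` above by `Ldw`, and Strong Completeness bounds it
below by `Lw`. Monotonicity closes the gap: it carries an explanation over `D` to the question whose
dataset is the whole feature space, where `Ldw` and `Lw` coincide. -/

section

variable {T : CTheory} {κ : Set (ℕ × ℕ) → ℕ} {D D' : Set (Set (ℕ × ℕ))} {x E : Set (ℕ × ℕ)}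
  {L : Explainer}

theorem IsQuestion.featureSpace (hQ : IsQuestion T κ D x) :
    IsQuestion T κ (FeatureSpace T) x :=
  ⟨hQ.1, subset_rfl, hQ.2.1 hQ.2.2⟩

theorem mem_Ldw_iff :
    E ∈ Ldw T κ D x ↔ E ⊆ x ∧ ¬ ∃ y ∈ D, E ⊆ y ∧ κ y ≠ κ x := by
  simp only [Ldw, Set.mem_ofPred_eq, not_exists, not_and, not_not]

theorem notMem_Ldw_iff (hEx : E ⊆ x) :
    E ∉ Ldw T κ D x ↔ ∃ y ∈ D, E ⊆ y ∧ κ y ≠ κ x := by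
  rw [mem_Ldw_iff, and_iff_right hEx, not_not]

theorem Ldw_subset_Ldw (hD : D ⊆ D') : Ldw T κ D' x ⊆ Ldw T κ D x :=
  fun _ hE => ⟨hE.1, fun y hy => hE.2 y (hD hy)⟩

theorem feasibility_and_validity_iff_subset_Ldw :
    Feasibility L ∧ Validity L ↔
      ∀ T κ D x, IsQuestion T κ D x → L T κ D x ⊆ Ldw T κ D x := by
  constructor
  · rintro ⟨hF, hV⟩ T κ D x hQ E hE
    exact mem_Ldw_iff.2 ⟨hF T κ D x hQ E hE, hV T κ D x hQ E hE⟩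
  · intro h
    exact ⟨fun T κ D x hQ E hE => (mem_Ldw_iff.1 (h T κ D x hQ hE)).1,
      fun T κ D x hQ E hE => (mem_Ldw_iff.1 (h T κ D x hQ hE)).2⟩

theorem strongCompleteness_iff_Lw_subset :
    StrongCompleteness L ↔ ∀ T κ D x, IsQuestion T κ D x → Lw T κ D x ⊆ L T κ D x := by
  constructor
  · intro hS T κ D x hQ E hE
    by_contra hEL
    exact (notMem_Ldw_iff hE.1).2 (hS T κ D x hQ E hE.1 hEL) hE
  · intro h T κ D x hQ E hEx hEL
    exact (notMem_Ldw_iff hEx).1 fun hE => hEL (h T κ D x hQ hE)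

theorem Monotonicity.subset_Lw (hM : Monotonicity L)
    (hL : ∀ T κ D x, IsQuestion T κ D x → L T κ D x ⊆ Ldw T κ D x) (hQ : IsQuestion T κ D x) :
    L T κ D x ⊆ Lw T κ D x :=
  calc L T κ D x
    _ ⊆ L T κ (FeatureSpace T) x := hM T κ D _ x hQ hQ.featureSpace hQ.2.1
    _ ⊆ Ldw T κ (FeatureSpace T) x := hL T κ _ x hQ.featureSpace

theorem monotonicity_of_eq_Lw
    (h : ∀ T κ D x, IsQuestion T κ D x → L T κ D x = Lw T κ D x) : Monotonicity L :=
  fun T κ D D' x hQ hQ' _ =>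
    calc L T κ D x
      _ = Lw T κ D x := h T κ D x hQ
      _ = Lw T κ D' x := rfl
      _ ⊆ L T κ D' x := (h T κ D' x hQ').superset

end

theorem feasibility_validity_monotonicity_strongCompleteness_iff_eq_Lw
    (L : Explainer) (hL : IsExplainer L) :
    (Feasibility L ∧ Validity L ∧ Monotonicity L ∧ StrongCompleteness L) ↔
      ∀ T κ D x, IsQuestion T κ D x → L T κ D x = Lw T κ D x := by
  rw [← and_assoc, feasibility_and_validity_iff_subset_Ldw, strongCompleteness_iff_Lw_subset]
  constructor
  · rintro ⟨hsub, hM, hsup⟩ T κ D x hQ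
    exact (hM.subset_Lw hsub hQ).antisymm (hsup T κ D x hQ)
  · intro h
    refine ⟨fun T κ D x hQ => ?_, monotonicity_of_eq_Lw h,
      fun T κ D x hQ => (h T κ D x hQ).superset⟩
    calc L T κ D x
      _ = Ldw T κ (FeatureSpace T) x := h T κ D x hQ
      _ ⊆ Ldw T κ D x := Ldw_subset_Ldw hQ.2.1
end
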